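/- Let (Ω, F, ℙ) be a probability space and let X : Ω → ℝ^d be a random variable with 𝔼(|X|^n) < ∞ for every n ∈ ℕ. Let φ be in the Schwartz space S(ℝ^d) and define ψ(y) := 𝔼(φ(y − X)) = ∫_Ω φ(y − X(ω)) dℙ(ω). Then ψ is again a Schwartz function, and for every n ∈ ℕ there exists a polynomial P_n with nonnegative coefficients (independent of φ and X) such that |ψ|_n ≤ 𝔼(P_n(|X|)) · |φ|_n. -/

import Mathlib

open MeasureTheory

noncomputable def hermitePoly (n : ℕ) (x : ℝ) : ℝ :=
  (-1 : ℝ) ^ n * Real.exp (x ^ 2 / 2) *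
    iteratedDeriv n (fun y : ℝ => Real.exp (-(y ^ 2 / 2))) x

noncomputable def hermiteFun (n : ℕ) (x : ℝ) : ℝ :=
  (Real.sqrt (Real.sqrt (2 * Real.pi) * n.factorial))⁻¹ *
    Real.exp (-(x ^ 2 / 4)) * hermitePoly n x

noncomputable def hermiteFunMulti (d : ℕ) (α : Fin d → ℕ) (x : EuclideanSpace ℝ (Fin d)) : ℝ :=
  ∏ i, hermiteFun (α i) (x i)

noncomputable def hermCoeff (d : ℕ) (f : EuclideanSpace ℝ (Fin d) → ℝ) (β : Fin d → ℕ) : ℝ :=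
  ∫ x, f x * hermiteFunMulti d β x

noncomputable def hermNorm (d n : ℕ) (f : EuclideanSpace ℝ (Fin d) → ℝ) : ℝ :=
  Real.sqrt (∑' β : Fin d → ℕ,
    (((2 * ∑ i, β i) + d : ℕ) : ℝ) ^ (2 * n) * hermCoeff d f β ^ 2)

/-!
The Hermite functions form a Hilbert basis of `L²(ℝ^d)` of eigenfunctions of the harmonic oscillator
`H`, with eigenvalues `2|β| + d`, so that `|φ|_n = ‖H ^ n φ‖` in `L²`. Translation by `x` is an
isometry of `L²`, and `H` commutes with it up to terms which are polynomial in `x` and of first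
order in the annihilation and creation operators; these cost one order of the Hermite norm,
whereas `H` costs exactly one. By induction on `n`, translation by `x` is bounded for `|·|_n` by a
polynomial in `|x|`.

For the average `ψ` of the translates, Fubini's theorem writes `|ψ|_n² = ⟨ψ, H ^ n (H ^ n ψ)⟩` as
the expectation of `⟨H ^ n φ(· - X), H ^ n ψ⟩`, which is at most `𝔼(P_n(|X|)) |φ|_n |ψ|_n` by
Cauchy–Schwarz.
-/

open scoped SchwartzMap LineDeriv ENNReal NNReal

universe u v

section AveragedTranslates

variable {Ω : Type v} [MeasurableSpace Ω] {μ : Measure Ω} [IsFiniteMeasure μ]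
  {E : Type u} [NormedAddCommGroup E] [NormedSpace ℝ E] {X : Ω → E}

section

variable {F : Type u} [NormedAddCommGroup F] [NormedSpace ℝ F]

lemma integrable_schwartz_const_sub (hX : AEStronglyMeasurable X μ) (f : 𝓢(E, F)) (y : E) :
    Integrable (fun ω => f (y - X ω)) μ := by
  obtain ⟨C, hC⟩ := f.decay 0 0
  exact .of_bound (f.continuous.comp_aestronglyMeasurable (aestronglyMeasurable_const.sub hX)) C
    (ae_of_all _ fun ω => by simpa using hC.2 (y - X ω))

lemma hasFDerivAt_integral_schwartz_const_sub (hX : AEStronglyMeasurable X μ) (f : 𝓢(E, F))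
    (y : E) :
    HasFDerivAt (fun y => ∫ ω, f (y - X ω) ∂μ)
      (∫ ω, SchwartzMap.fderivCLM ℝ E F f (y - X ω) ∂μ) y := by
  obtain ⟨C, hC⟩ := (SchwartzMap.fderivCLM ℝ E F f).decay 0 0
  refine hasFDerivAt_integral_of_dominated_of_fderiv_le (bound := fun _ => C)
    (F' := fun y ω => SchwartzMap.fderivCLM ℝ E F f (y - X ω)) Filter.univ_mem
    (.of_forall fun z => (integrable_schwartz_const_sub hX f z).1)
    (integrable_schwartz_const_sub hX f y)
    (integrable_schwartz_const_sub hX (SchwartzMap.fderivCLM ℝ E F f) y).1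
    (ae_of_all _ fun ω z _ => by simpa using hC.2 (z - X ω)) (integrable_const C)
    (ae_of_all _ fun ω z _ => ?_)
  simpa [Function.comp_def] using
    (f.hasFDerivAt (z - X ω)).comp z ((hasFDerivAt_id z).sub_const (X ω))

lemma fderiv_integral_schwartz_const_sub (hX : AEStronglyMeasurable X μ) (f : 𝓢(E, F)) :
    fderiv ℝ (fun y => ∫ ω, f (y - X ω) ∂μ) =
      fun y => ∫ ω, SchwartzMap.fderivCLM ℝ E F f (y - X ω) ∂μ :=
  funext fun y => (hasFDerivAt_integral_schwartz_const_sub hX f y).fderiv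

lemma norm_pow_mul_norm_integral_schwartz_le (hX : AEStronglyMeasurable X μ)
    (hmom : ∀ k : ℕ, Integrable (fun ω => ‖X ω‖ ^ k) μ) (p : ℕ) (f : 𝓢(E, F)) :
    ∃ C : ℝ, ∀ y, ‖y‖ ^ p * ‖∫ ω, f (y - X ω) ∂μ‖ ≤ C := by
  obtain ⟨B, hB⟩ := f.decay 0 0
  obtain ⟨D, hD⟩ := f.decay p 0
  simp only [pow_zero, norm_iteratedFDeriv_zero, one_mul] at hB hD
  have peetre (y : E) (ω : Ω) :
      ‖y‖ ^ p * ‖f (y - X ω)‖ ≤ 2 ^ (p - 1) * (D + ‖X ω‖ ^ p * B) :=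
    calc ‖y‖ ^ p * ‖f (y - X ω)‖
        ≤ (‖y - X ω‖ + ‖X ω‖) ^ p * ‖f (y - X ω)‖ := by
          gcongr; simpa using norm_add_le (y - X ω) (X ω)
      _ ≤ 2 ^ (p - 1) * (‖y - X ω‖ ^ p + ‖X ω‖ ^ p) * ‖f (y - X ω)‖ := by
          gcongr; exact add_pow_le (norm_nonneg _) (norm_nonneg _) p
      _ = 2 ^ (p - 1) * (‖y - X ω‖ ^ p * ‖f (y - X ω)‖ + ‖X ω‖ ^ p * ‖f (y - X ω)‖) := by ring
      _ ≤ 2 ^ (p - 1) * (D + ‖X ω‖ ^ p * B) := by gcongr; exacts [hD.2 _, hB.2 _]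
  refine ⟨∫ ω, 2 ^ (p - 1) * (D + ‖X ω‖ ^ p * B) ∂μ, fun y => ?_⟩
  calc ‖y‖ ^ p * ‖∫ ω, f (y - X ω) ∂μ‖
      ≤ ‖y‖ ^ p * ∫ ω, ‖f (y - X ω)‖ ∂μ := by gcongr; exact norm_integral_le_integral_norm _
    _ = ∫ ω, ‖y‖ ^ p * ‖f (y - X ω)‖ ∂μ := (integral_const_mul _ _).symm
    _ ≤ ∫ ω, 2 ^ (p - 1) * (D + ‖X ω‖ ^ p * B) ∂μ :=
        integral_mono ((integrable_schwartz_const_sub hX f y).norm.const_mul _)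
          (((integrable_const D).add ((hmom p).mul_const B)).const_mul _) (peetre y)

end

lemma contDiff_integral_schwartz_const_sub (hX : AEStronglyMeasurable X μ) (n : ℕ) :
    ∀ {F : Type u} [NormedAddCommGroup F] [NormedSpace ℝ F] (f : 𝓢(E, F)),
      ContDiff ℝ n (fun y => ∫ ω, f (y - X ω) ∂μ) := by
  induction n with
  | zero =>
    intro F _ _ f
    exact contDiff_zero.2 (continuous_iff_continuousAt.2 fun y =>
      (hasFDerivAt_integral_schwartz_const_sub hX f y).continuousAt)
  | succ n ih =>
    intro F _ _ f
    rw [Nat.cast_succ, contDiff_succ_iff_fderiv, fderiv_integral_schwartz_const_sub hX]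
    exact ⟨fun y => (hasFDerivAt_integral_schwartz_const_sub hX f y).differentiableAt,
      by simp, ih _⟩

lemma decay_integral_schwartz_const_sub (hX : AEStronglyMeasurable X μ)
    (hmom : ∀ k : ℕ, Integrable (fun ω => ‖X ω‖ ^ k) μ) (p n : ℕ) :
    ∀ {F : Type u} [NormedAddCommGroup F] [NormedSpace ℝ F] (f : 𝓢(E, F)),
      ∃ C : ℝ, ∀ y, ‖y‖ ^ p * ‖iteratedFDeriv ℝ n (fun y => ∫ ω, f (y - X ω) ∂μ) y‖ ≤ C := by
  induction n with
  | zero =>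
    intro F _ _ f
    simpa only [norm_iteratedFDeriv_zero] using
      norm_pow_mul_norm_integral_schwartz_le hX hmom p f
  | succ n ih =>
    intro F _ _ f
    simpa only [← norm_iteratedFDeriv_fderiv, fderiv_integral_schwartz_const_sub hX] using
      ih (SchwartzMap.fderivCLM ℝ E F f)

/-- The average `y ↦ ∫ φ (y - X ω) dμ(ω)` of the translates of a Schwartz function `φ` along a
random vector `X` all of whose moments are finite, as a Schwartz function. -/
noncomputable def averageTranslate {F : Type u} [NormedAddCommGroup F] [NormedSpace ℝ F]
    (hX : AEStronglyMeasurable X μ) (hmom : ∀ k : ℕ, Integrable (fun ω => ‖X ω‖ ^ k) μ)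
    (φ : 𝓢(E, F)) : 𝓢(E, F) where
  toFun y := ∫ ω, φ (y - X ω) ∂μ
  smooth' := contDiff_infty.2 fun n => contDiff_integral_schwartz_const_sub hX n φ
  decay' p n := decay_integral_schwartz_const_sub hX hmom p n φ

end AveragedTranslates

section Gaussian

lemma one_add_norm_pow_mul_exp_neg_mul_sq_le {E : Type*} [SeminormedAddCommGroup E] {b : ℝ}
    (hb : 0 < b) (k : ℕ) :
    ∃ C : ℝ, ∀ x : E, (1 + ‖x‖) ^ k * Real.exp (-b * ‖x‖ ^ 2) ≤ C := by
  refine ⟨k.factorial * Real.exp (1 + 1 / (4 * b)), fun x => ?_⟩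
  have hpow : (1 + ‖x‖) ^ k ≤ k.factorial * Real.exp (1 + ‖x‖) := by
    have := Real.pow_div_factorial_le_exp (x := 1 + ‖x‖) (by positivity) k
    rwa [div_le_iff₀' (by positivity)] at this
  have hsq : ‖x‖ - b * ‖x‖ ^ 2 = 1 / (4 * b) - b * (‖x‖ - 1 / (2 * b)) ^ 2 := by
    field_simp; ring
  calc (1 + ‖x‖) ^ k * Real.exp (-b * ‖x‖ ^ 2)
      ≤ k.factorial * Real.exp (1 + ‖x‖) * Real.exp (-b * ‖x‖ ^ 2) := by gcongr
    _ = k.factorial * Real.exp (1 + (‖x‖ - b * ‖x‖ ^ 2)) := by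
        rw [mul_assoc, ← Real.exp_add]; ring_nf
    _ ≤ k.factorial * Real.exp (1 + 1 / (4 * b)) := by
        gcongr
        have : 0 ≤ b * (‖x‖ - 1 / (2 * b)) ^ 2 := by positivity
        linarith

section ExpComp

variable {E : Type*} [NormedAddCommGroup E] [NormedSpace ℝ E] {f : E → ℝ}

lemma norm_iteratedFDeriv_exp_comp_le (hf : f.HasTemperateGrowth) (n : ℕ) :
    ∃ (k : ℕ) (C : ℝ), ∀ x,
      ‖iteratedFDeriv ℝ n (fun x => Real.exp (f x)) x‖ ≤ C * (1 + ‖x‖) ^ k * Real.exp (f x) := by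
  obtain ⟨k, C, hC, hbound⟩ := hf.norm_iteratedFDeriv_le_uniform n
  refine ⟨k * n, n.factorial * (1 + C) ^ n, fun x => ?_⟩
  have hx : 1 ≤ (1 + C) * (1 + ‖x‖) ^ k :=
    one_le_mul_of_one_le_of_one_le (by linarith) (one_le_pow₀ (by simp))
  have hle := norm_iteratedFDeriv_comp_le (g := Real.exp) (n := n) Real.contDiff_exp hf.1
    (by exact_mod_cast le_top) x (C := Real.exp (f x)) (D := (1 + C) * (1 + ‖x‖) ^ k)
    (fun i _ => by
      rw [norm_iteratedFDeriv_eq_norm_iteratedDeriv, iteratedDeriv_eq_iterate, Real.iter_deriv_exp,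
        Real.norm_eq_abs, Real.abs_exp])
    (fun i hi hin => by
      refine (hbound i hin x).trans ((?_ : _ ≤ _).trans (le_self_pow₀ hx (by lia)))
      gcongr; linarith)
  calc _ ≤ _ := hle
    _ = _ := by rw [mul_pow, ← pow_mul]; ring

lemma decay_exp_comp (hf : f.HasTemperateGrowth)
    (hdecay : ∀ k : ℕ, ∃ C : ℝ, ∀ x, (1 + ‖x‖) ^ k * Real.exp (f x) ≤ C) (k n : ℕ) :
    ∃ C : ℝ, ∀ x, ‖x‖ ^ k * ‖iteratedFDeriv ℝ n (fun x => Real.exp (f x)) x‖ ≤ C := by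
  obtain ⟨m, B, hB⟩ := norm_iteratedFDeriv_exp_comp_le hf n
  obtain ⟨D, hD⟩ := hdecay (k + m)
  refine ⟨|B| * D, fun x => ?_⟩
  calc ‖x‖ ^ k * ‖iteratedFDeriv ℝ n (fun x => Real.exp (f x)) x‖
      ≤ (1 + ‖x‖) ^ k * (|B| * (1 + ‖x‖) ^ m * Real.exp (f x)) := by
        gcongr
        · linarith [norm_nonneg x]
        · exact (hB x).trans (by gcongr; exact le_abs_self B)
    _ = |B| * ((1 + ‖x‖) ^ (k + m) * Real.exp (f x)) := by ring
    _ ≤ |B| * D := by gcongr; exact hD x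

end ExpComp

variable {V : Type*} [NormedAddCommGroup V] [InnerProductSpace ℝ V]

lemma hasTemperateGrowth_neg_mul_norm_sq (b : ℝ) :
    (fun x : V => -b * ‖x‖ ^ 2).HasTemperateGrowth := by
  fun_prop

/-- The Gaussian `x ↦ exp (-b ‖x‖²)` as a Schwartz function. -/
noncomputable def gaussianSchwartz (V : Type*) [NormedAddCommGroup V] [InnerProductSpace ℝ V]
    {b : ℝ} (hb : 0 < b) : 𝓢(V, ℝ) where
  toFun x := Real.exp (-b * ‖x‖ ^ 2)
  smooth' := (hasTemperateGrowth_neg_mul_norm_sq b).1.exp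
  decay' := decay_exp_comp (hasTemperateGrowth_neg_mul_norm_sq b)
    (one_add_norm_pow_mul_exp_neg_mul_sq_le hb)

lemma gaussianSchwartz_apply {b : ℝ} (hb : 0 < b) (x : V) :
    gaussianSchwartz V hb x = Real.exp (-b * ‖x‖ ^ 2) := rfl

end Gaussian

section HermiteFunctions

lemma hermitePoly_eq_aeval (n : ℕ) (x : ℝ) :
    hermitePoly n x = Polynomial.aeval x (Polynomial.hermite n) := by
  rw [Polynomial.hermite_eq_deriv_gaussian', hermitePoly, iteratedDeriv_eq_iterate]
  ring

lemma derivative_hermite_succ (n : ℕ) :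
    Polynomial.derivative (Polynomial.hermite (n + 1)) =
      (n + 1 : Polynomial ℤ) * Polynomial.hermite n := by
  induction n with
  | zero => simp
  | succ n ih =>
    have hderiv : Polynomial.derivative ((n + 1 : Polynomial ℤ) * Polynomial.hermite n) =
        (n + 1 : Polynomial ℤ) * Polynomial.derivative (Polynomial.hermite n) := by
      simp [Polynomial.derivative_mul]
    rw [Polynomial.hermite_succ (n + 1), Polynomial.derivative_sub, Polynomial.derivative_mul, ih,
      hderiv, Polynomial.hermite_succ n, Polynomial.derivative_X]
    push_cast
    ring

lemma aeval_derivative_hermite (n : ℕ) (x : ℝ) :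
    Polynomial.aeval x (Polynomial.derivative (Polynomial.hermite n)) =
      n * hermitePoly (n - 1) x := by
  cases n with
  | zero => simp
  | succ n => simp [derivative_hermite_succ, hermitePoly_eq_aeval, -Polynomial.hermite_succ]

lemma hasDerivAt_hermitePoly (n : ℕ) (x : ℝ) :
    HasDerivAt (hermitePoly n) (n * hermitePoly (n - 1) x) x := by
  rw [funext (hermitePoly_eq_aeval n), ← aeval_derivative_hermite]
  exact (Polynomial.hermite n).hasDerivAt_aeval x

lemma hermitePoly_succ (n : ℕ) (x : ℝ) :
    hermitePoly (n + 1) x = x * hermitePoly n x - n * hermitePoly (n - 1) x := by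
  rw [← aeval_derivative_hermite, hermitePoly_eq_aeval, hermitePoly_eq_aeval,
    Polynomial.hermite_succ]
  simp

/-- The constant `(√(2π) n!)^{-1/2}` normalising the Hermite function `h_n` in `L²(ℝ)`. -/
noncomputable def hermiteNorming (n : ℕ) : ℝ := (√(√(2 * Real.pi) * n.factorial))⁻¹

lemma sqrt_add_one_mul_hermiteNorming_succ (n : ℕ) :
    √(n + 1) * hermiteNorming (n + 1) = hermiteNorming n := by
  have hfact : √(2 * Real.pi) * (n + 1).factorial =
      (n + 1) * (√(2 * Real.pi) * n.factorial) := by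
    rw [Nat.factorial_succ]; push_cast; ring
  have : √((n : ℝ) + 1) ≠ 0 := by positivity
  rw [hermiteNorming, hermiteNorming, hfact, Real.sqrt_mul (by positivity)]
  field_simp

lemma natCast_mul_hermiteNorming (n : ℕ) :
    n * hermiteNorming n = √n * hermiteNorming (n - 1) := by
  rcases n with - | n
  · simp
  · rw [Nat.add_sub_cancel, ← sqrt_add_one_mul_hermiteNorming_succ n, ← mul_assoc, Nat.cast_succ,
      Real.mul_self_sqrt (by positivity)]

lemma hermiteFun_eq (n : ℕ) (x : ℝ) :
    hermiteFun n x = hermiteNorming n * Real.exp (-(x ^ 2 / 4)) * hermitePoly n x := rfl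

lemma mul_hermiteFun (n : ℕ) (x : ℝ) :
    x * hermiteFun n x = √n * hermiteFun (n - 1) x + √(n + 1) * hermiteFun (n + 1) x := by
  simp only [hermiteFun_eq, hermitePoly_succ]
  linear_combination
    (-Real.exp (-(x ^ 2 / 4)) * (x * hermitePoly n x - n * hermitePoly (n - 1) x)) *
      sqrt_add_one_mul_hermiteNorming_succ n +
    Real.exp (-(x ^ 2 / 4)) * hermitePoly (n - 1) x * natCast_mul_hermiteNorming n

lemma hasDerivAt_hermiteFun (n : ℕ) (x : ℝ) :
    HasDerivAt (hermiteFun n) (√n * hermiteFun (n - 1) x - x / 2 * hermiteFun n x) x := by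
  have hexp : HasDerivAt (fun x : ℝ => Real.exp (-(x ^ 2 / 4)))
      (Real.exp (-(x ^ 2 / 4)) * (-(x / 2))) x := by
    refine (((hasDerivAt_pow 2 x).div_const 4).neg.congr_deriv ?_).exp
    norm_num; ring
  refine ((hexp.const_mul (hermiteNorming n)).mul (hasDerivAt_hermitePoly n x)).congr_deriv ?_
  simp only [hermiteFun_eq]
  linear_combination
    Real.exp (-(x ^ 2 / 4)) * hermitePoly (n - 1) x * natCast_mul_hermiteNorming n

variable {d : ℕ}

lemma hermiteFunMulti_eq_mul_prod_erase {β γ : Fin d → ℕ} (i : Fin d)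
    (h : ∀ j ≠ i, γ j = β j) (y : EuclideanSpace ℝ (Fin d)) :
    hermiteFunMulti d γ y =
      hermiteFun (γ i) (y i) * ∏ j ∈ Finset.univ.erase i, hermiteFun (β j) (y j) := by
  rw [hermiteFunMulti, ← Finset.mul_prod_erase _ _ (Finset.mem_univ i)]
  congr 1
  exact Finset.prod_congr rfl fun j hj => by rw [h j (Finset.ne_of_mem_erase hj)]

lemma coord_mul_hermiteFunMulti (β : Fin d → ℕ) (i : Fin d) (y : EuclideanSpace ℝ (Fin d)) :
    y i * hermiteFunMulti d β y =
      √(β i) * hermiteFunMulti d (β - Pi.single i 1) y +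
        √(β i + 1) * hermiteFunMulti d (β + Pi.single i 1) y := by
  rw [hermiteFunMulti_eq_mul_prod_erase (γ := β) i (fun _ _ => rfl),
    hermiteFunMulti_eq_mul_prod_erase (β := β) (γ := β - Pi.single i 1) i (by simp +contextual),
    hermiteFunMulti_eq_mul_prod_erase (β := β) (γ := β + Pi.single i 1) i (by simp +contextual)]
  simp only [Pi.sub_apply, Pi.add_apply, Pi.single_eq_same]
  linear_combination (∏ j ∈ Finset.univ.erase i, hermiteFun (β j) (y j)) *
    mul_hermiteFun (β i) (y i)

lemma hasLineDerivAt_hermiteFunMulti (β : Fin d → ℕ) (i : Fin d)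
    (y : EuclideanSpace ℝ (Fin d)) :
    HasLineDerivAt ℝ (hermiteFunMulti d β)
      (√(β i) * hermiteFunMulti d (β - Pi.single i 1) y - y i / 2 * hermiteFunMulti d β y) y
      (EuclideanSpace.single i 1) := by
  have hline (t : ℝ) : hermiteFunMulti d β (y + t • EuclideanSpace.single i 1) =
      hermiteFun (β i) (y i + t) * ∏ j ∈ Finset.univ.erase i, hermiteFun (β j) (y j) := by
    rw [hermiteFunMulti_eq_mul_prod_erase i (fun _ _ => rfl)]
    congr 1
    · simp
    · exact Finset.prod_congr rfl fun j hj => by simp [Finset.ne_of_mem_erase hj]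
  rw [hermiteFunMulti_eq_mul_prod_erase (γ := β) i (fun _ _ => rfl),
    hermiteFunMulti_eq_mul_prod_erase (β := β) (γ := β - Pi.single i 1) i (by simp +contextual)]
  have hderiv := (((hasDerivAt_hermiteFun (β i) (y i + 0)).comp_const_add (y i) 0).mul_const
    (∏ j ∈ Finset.univ.erase i, hermiteFun (β j) (y j)))
  refine (hderiv.congr_of_eventuallyEq (.of_forall hline)).congr_deriv ?_
  simp only [Pi.sub_apply, Pi.single_eq_same, add_zero]
  ring

lemma hasTemperateGrowth_aeval (p : Polynomial ℤ) :
    (fun x : ℝ => Polynomial.aeval x p).HasTemperateGrowth := by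
  induction p using Polynomial.induction_on' with
  | add p q hp hq => simp only [map_add]; exact hp.add hq
  | monomial n a => simp only [Polynomial.aeval_monomial]; fun_prop

lemma hasTemperateGrowth_finset_prod {ι E : Type*} [NormedAddCommGroup E] [NormedSpace ℝ E]
    {f : ι → E → ℝ} {s : Finset ι} (hf : ∀ i ∈ s, (f i).HasTemperateGrowth) :
    (fun x => ∏ i ∈ s, f i x).HasTemperateGrowth := by
  classical
  induction s using Finset.induction_on with
  | empty => simp
  | insert i s his ih =>
    simp only [Finset.prod_insert his]
    exact (hf i (s.mem_insert_self i)).mul (ih fun j hj => hf j (Finset.mem_insert_of_mem hj))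

lemma hasTemperateGrowth_coord (i : Fin d) :
    (fun y : EuclideanSpace ℝ (Fin d) => y i).HasTemperateGrowth :=
  (EuclideanSpace.proj i : EuclideanSpace ℝ (Fin d) →L[ℝ] ℝ).hasTemperateGrowth

/-- The polynomial factor of the Hermite function `h_β`. -/
noncomputable def hermitePolyMulti (β : Fin d → ℕ) (y : EuclideanSpace ℝ (Fin d)) : ℝ :=
  ∏ i, hermiteNorming (β i) * hermitePoly (β i) (y i)

lemma hasTemperateGrowth_hermitePolyMulti (β : Fin d → ℕ) :
    (hermitePolyMulti β).HasTemperateGrowth := by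
  refine hasTemperateGrowth_finset_prod fun i _ => ?_
  simp only [hermitePoly_eq_aeval]
  exact (Function.HasTemperateGrowth.const _).mul
    ((hasTemperateGrowth_aeval _).comp (hasTemperateGrowth_coord i))

lemma hermiteFunMulti_eq_mul_exp (β : Fin d → ℕ) (y : EuclideanSpace ℝ (Fin d)) :
    hermiteFunMulti d β y = hermitePolyMulti β y * Real.exp (-(1 / 4) * ‖y‖ ^ 2) := by
  have hexp : Real.exp (-(1 / 4) * ‖y‖ ^ 2) = ∏ i, Real.exp (-(y i ^ 2 / 4)) := by
    rw [← Real.exp_sum, EuclideanSpace.real_norm_sq_eq, Finset.mul_sum]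
    congr 1; exact Finset.sum_congr rfl fun i _ => by ring
  rw [hexp, hermitePolyMulti, ← Finset.prod_mul_distrib]
  exact Finset.prod_congr rfl fun i _ => by rw [hermiteFun_eq]; ring

/-- The Hermite function `h_β` on `ℝ^d` as a Schwartz function. -/
noncomputable def hermiteSchwartz (β : Fin d → ℕ) : 𝓢(EuclideanSpace ℝ (Fin d), ℝ) :=
  SchwartzMap.smulLeftCLM ℝ (hermitePolyMulti β)
    (gaussianSchwartz (EuclideanSpace ℝ (Fin d)) (b := 1 / 4) (by norm_num))

@[simp]
lemma hermiteSchwartz_apply (β : Fin d → ℕ) (y : EuclideanSpace ℝ (Fin d)) :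
    hermiteSchwartz β y = hermiteFunMulti d β y := by
  rw [hermiteSchwartz, SchwartzMap.smulLeftCLM_apply_apply (hasTemperateGrowth_hermitePolyMulti β),
    hermiteFunMulti_eq_mul_exp]
  rfl

end HermiteFunctions

section LadderOperators

variable {d : ℕ}

/-- Multiplication by the `i`-th coordinate, as an operator on Schwartz functions. -/
noncomputable def coordMul (i : Fin d) :
    𝓢(EuclideanSpace ℝ (Fin d), ℝ) →L[ℝ] 𝓢(EuclideanSpace ℝ (Fin d), ℝ) :=
  SchwartzMap.smulLeftCLM ℝ fun y => y i

/-- The `i`-th partial derivative, as an operator on Schwartz functions. -/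
noncomputable def partialDeriv (i : Fin d) :
    𝓢(EuclideanSpace ℝ (Fin d), ℝ) →L[ℝ] 𝓢(EuclideanSpace ℝ (Fin d), ℝ) :=
  LineDeriv.lineDerivOpCLM ℝ _ (EuclideanSpace.single i (1 : ℝ))

/-- The annihilation operator `y_i / 2 + ∂_i`, which lowers the `i`-th index of the Hermite
functions. -/
noncomputable def annihilation (i : Fin d) :
    𝓢(EuclideanSpace ℝ (Fin d), ℝ) →L[ℝ] 𝓢(EuclideanSpace ℝ (Fin d), ℝ) :=
  (1 / 2 : ℝ) • coordMul i + partialDeriv i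

/-- The creation operator `y_i / 2 - ∂_i`, which raises the `i`-th index of the Hermite
functions. It is the formal adjoint of `annihilation i`. -/
noncomputable def creation (i : Fin d) :
    𝓢(EuclideanSpace ℝ (Fin d), ℝ) →L[ℝ] 𝓢(EuclideanSpace ℝ (Fin d), ℝ) :=
  (1 / 2 : ℝ) • coordMul i - partialDeriv i

/-- The harmonic oscillator `∑ i, (A_i† A_i + A_i A_i†)`, with `A_i` and `A_i†` the annihilation
and creation operators; it equals `|y|² / 2 - 2Δ`. -/
noncomputable def harmonicOscillator :
    𝓢(EuclideanSpace ℝ (Fin d), ℝ) →L[ℝ] 𝓢(EuclideanSpace ℝ (Fin d), ℝ) :=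
  ∑ i, (creation i ∘L annihilation i + annihilation i ∘L creation i)

section Apply

variable (i : Fin d) (φ : 𝓢(EuclideanSpace ℝ (Fin d), ℝ)) (y : EuclideanSpace ℝ (Fin d))

lemma coordMul_apply : coordMul i φ y = y i * φ y :=
  SchwartzMap.smulLeftCLM_apply_apply (hasTemperateGrowth_coord i) φ y

lemma annihilation_apply :
    annihilation i φ y = y i / 2 * φ y + ∂_{EuclideanSpace.single i (1 : ℝ)} φ y := by
  change 1 / 2 * coordMul i φ y + ∂_{EuclideanSpace.single i (1 : ℝ)} φ y = _
  rw [coordMul_apply]; ring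

lemma creation_apply :
    creation i φ y = y i / 2 * φ y - ∂_{EuclideanSpace.single i (1 : ℝ)} φ y := by
  change 1 / 2 * coordMul i φ y - ∂_{EuclideanSpace.single i (1 : ℝ)} φ y = _
  rw [coordMul_apply]; ring

lemma annihilation_add_creation : annihilation i φ + creation i φ = coordMul i φ := by
  ext y
  rw [add_apply, annihilation_apply, creation_apply, coordMul_apply]; ring

lemma harmonicOscillator_apply : harmonicOscillator φ =
    ∑ i, (creation i (annihilation i φ) + annihilation i (creation i φ)) := by
  simp [harmonicOscillator]

end Apply

section HermiteFunctions

variable (i : Fin d) (β : Fin d → ℕ)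

lemma lineDerivOp_hermiteSchwartz (y : EuclideanSpace ℝ (Fin d)) :
    ∂_{EuclideanSpace.single i (1 : ℝ)} (hermiteSchwartz β) y =
      √(β i) * hermiteFunMulti d (β - Pi.single i 1) y - y i / 2 * hermiteFunMulti d β y := by
  rw [SchwartzMap.lineDerivOp_apply, funext (hermiteSchwartz_apply β)]
  exact (hasLineDerivAt_hermiteFunMulti β i y).lineDeriv

lemma annihilation_hermiteSchwartz :
    annihilation i (hermiteSchwartz β) = √(β i) • hermiteSchwartz (β - Pi.single i 1) := by
  ext y
  simp only [annihilation_apply, lineDerivOp_hermiteSchwartz, hermiteSchwartz_apply,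
    smul_apply, smul_eq_mul]
  ring

lemma creation_hermiteSchwartz :
    creation i (hermiteSchwartz β) = √(β i + 1) • hermiteSchwartz (β + Pi.single i 1) := by
  ext y
  simp only [creation_apply, lineDerivOp_hermiteSchwartz, hermiteSchwartz_apply,
    smul_apply, smul_eq_mul]
  linear_combination coord_mul_hermiteFunMulti β i y

end HermiteFunctions

/-- The embedding of the Schwartz functions into `L²(ℝ^d)`. -/
noncomputable def schwartzToL2 :
    𝓢(EuclideanSpace ℝ (Fin d), ℝ) →L[ℝ] Lp ℝ 2 (volume : Measure (EuclideanSpace ℝ (Fin d))) :=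
  SchwartzMap.toLpCLM ℝ ℝ 2 volume

lemma coeFn_schwartzToL2 (φ : 𝓢(EuclideanSpace ℝ (Fin d), ℝ)) : schwartzToL2 φ =ᵐ[volume] φ :=
  φ.coeFn_toLp 2

lemma inner_schwartzToL2_right (f : Lp ℝ 2 (volume : Measure (EuclideanSpace ℝ (Fin d))))
    (φ : 𝓢(EuclideanSpace ℝ (Fin d), ℝ)) :
    inner ℝ f (schwartzToL2 φ) = ∫ y, f y * φ y := by
  rw [L2.inner_def]
  refine integral_congr_ae ?_
  filter_upwards [coeFn_schwartzToL2 φ] with y hy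
  simp [hy, mul_comm]

lemma inner_schwartzToL2 (φ ψ : 𝓢(EuclideanSpace ℝ (Fin d), ℝ)) :
    inner ℝ (schwartzToL2 φ) (schwartzToL2 ψ) = ∫ y, φ y * ψ y := by
  rw [inner_schwartzToL2_right]
  refine integral_congr_ae ?_
  filter_upwards [coeFn_schwartzToL2 φ] with y hy
  simp [hy]

lemma integrable_schwartz_mul (φ ψ : 𝓢(EuclideanSpace ℝ (Fin d), ℝ)) :
    Integrable fun y => φ y * ψ y :=
  (φ.memLp 2).integrable_mul (ψ.memLp 2)

lemma integral_annihilation_mul (i : Fin d) (φ ψ : 𝓢(EuclideanSpace ℝ (Fin d), ℝ)) :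
    ∫ y, annihilation i φ y * ψ y = ∫ y, φ y * creation i ψ y := by
  have hparts := SchwartzMap.integral_mul_lineDerivOp_right_eq_neg_left (μ := volume) φ ψ
    (EuclideanSpace.single i (1 : ℝ))
  have hcoord : Integrable fun y => φ y * (y i / 2 * ψ y) := by
    refine ((integrable_schwartz_mul φ (coordMul i ψ)).div_const 2).congr (.of_forall fun y => ?_)
    simp only [coordMul_apply]; ring
  calc ∫ y, annihilation i φ y * ψ y
      = ∫ y, (φ y * (y i / 2 * ψ y) + ∂_{EuclideanSpace.single i (1 : ℝ)} φ y * ψ y) :=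
        integral_congr_ae (.of_forall fun y => by simp only [annihilation_apply]; ring)
    _ = ∫ y, (φ y * (y i / 2 * ψ y) - φ y * ∂_{EuclideanSpace.single i (1 : ℝ)} ψ y) := by
        rw [integral_add hcoord (integrable_schwartz_mul _ _),
          integral_sub hcoord (integrable_schwartz_mul _ _), hparts, sub_neg_eq_add]
    _ = ∫ y, φ y * creation i ψ y :=
        integral_congr_ae (.of_forall fun y => by simp only [creation_apply]; ring)

lemma integral_creation_mul (i : Fin d) (φ ψ : 𝓢(EuclideanSpace ℝ (Fin d), ℝ)) :
    ∫ y, creation i φ y * ψ y = ∫ y, φ y * annihilation i ψ y := by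
  simpa only [mul_comm] using (integral_annihilation_mul i ψ φ).symm

lemma inner_harmonicOscillator (φ ψ : 𝓢(EuclideanSpace ℝ (Fin d), ℝ)) :
    inner ℝ (schwartzToL2 (harmonicOscillator φ)) (schwartzToL2 ψ) =
      inner ℝ (schwartzToL2 φ) (schwartzToL2 (harmonicOscillator ψ)) := by
  simp only [harmonicOscillator_apply, map_sum, map_add, sum_inner, inner_sum, inner_add_left,
    inner_add_right, inner_schwartzToL2, integral_creation_mul, integral_annihilation_mul]

lemma sub_single_add_single {ι : Type*} [DecidableEq ι] {β : ι → ℕ} {i : ι} (h : β i ≠ 0) :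
    β - Pi.single i 1 + Pi.single i 1 = β :=
  tsub_add_cancel_of_le fun j => by
    rcases eq_or_ne j i with rfl | hj <;> simp_all [Nat.one_le_iff_ne_zero]

section Coefficients

variable (i : Fin d) (φ : 𝓢(EuclideanSpace ℝ (Fin d), ℝ)) (β : Fin d → ℕ)

lemma hermCoeff_eq_integral_hermiteSchwartz (f : EuclideanSpace ℝ (Fin d) → ℝ) :
    hermCoeff d f β = ∫ y, f y * hermiteSchwartz β y := by
  simp only [hermCoeff, hermiteSchwartz_apply]

lemma hermCoeff_eq_inner :
    hermCoeff d φ β = inner ℝ (schwartzToL2 φ) (schwartzToL2 (hermiteSchwartz β)) := by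
  rw [inner_schwartzToL2, hermCoeff_eq_integral_hermiteSchwartz]

lemma hermCoeff_annihilation :
    hermCoeff d (annihilation i φ) β = √(β i + 1) * hermCoeff d φ (β + Pi.single i 1) := by
  simp only [hermCoeff_eq_integral_hermiteSchwartz, integral_annihilation_mul,
    creation_hermiteSchwartz, smul_apply, smul_eq_mul, mul_left_comm (φ _),
    integral_const_mul]

lemma hermCoeff_creation :
    hermCoeff d (creation i φ) β = √(β i) * hermCoeff d φ (β - Pi.single i 1) := by
  simp only [hermCoeff_eq_integral_hermiteSchwartz, integral_creation_mul,
    annihilation_hermiteSchwartz, smul_apply, smul_eq_mul, mul_left_comm (φ _),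
    integral_const_mul]

lemma hermCoeff_creation_annihilation :
    hermCoeff d (creation i (annihilation i φ)) β = β i * hermCoeff d φ β := by
  rw [hermCoeff_creation, hermCoeff_annihilation]
  rcases eq_or_ne (β i) 0 with h | h
  · simp [h]
  · have hβ := sub_single_add_single h
    have hcast : (((β - Pi.single i 1 : Fin d → ℕ) i : ℝ)) + 1 = β i := by
      simpa using congrArg (Nat.cast (R := ℝ)) (congrFun hβ i)
    rw [hβ, hcast, ← mul_assoc, Real.mul_self_sqrt (Nat.cast_nonneg _)]

lemma hermCoeff_annihilation_creation :
    hermCoeff d (annihilation i (creation i φ)) β = (β i + 1) * hermCoeff d φ β := by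
  rw [hermCoeff_annihilation, hermCoeff_creation, add_tsub_cancel_right, ← mul_assoc,
    Pi.add_apply, Pi.single_eq_same, Nat.cast_succ, Real.mul_self_sqrt (by positivity)]

/-- The eigenvalue `2|β| + d` of the harmonic oscillator at the Hermite function of index `β`. -/
def oscillatorEigenvalue : ℝ := (2 * ∑ i, β i + d : ℕ)

lemma hermCoeff_harmonicOscillator :
    hermCoeff d (harmonicOscillator φ) β = oscillatorEigenvalue β * hermCoeff d φ β := by
  have hterm (i : Fin d) : hermCoeff d
      (creation i (annihilation i φ) + annihilation i (creation i φ) : 𝓢(_, ℝ)) β =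
        (2 * β i + 1) * hermCoeff d φ β := by
    rw [hermCoeff_eq_inner, map_add, inner_add_left, ← hermCoeff_eq_inner, ← hermCoeff_eq_inner,
      hermCoeff_creation_annihilation, hermCoeff_annihilation_creation]
    ring
  rw [harmonicOscillator_apply, hermCoeff_eq_inner, map_sum, sum_inner]
  simp only [← hermCoeff_eq_inner, hterm, ← Finset.sum_mul, Finset.sum_add_distrib,
    ← Finset.mul_sum]
  simp [oscillatorEigenvalue]

end Coefficients

end LadderOperators

section MomentProblem

lemma integral_cexp_mul_I_mul_eq_zero {Ω : Type*} [MeasurableSpace Ω] {μ : Measure Ω}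
    {X u : Ω → ℝ} (hX : AEStronglyMeasurable X μ) (hu : AEStronglyMeasurable u μ)
    (hexp : Integrable (fun ω => Real.exp |X ω| * u ω) μ)
    (hmom : ∀ k : ℕ, ∫ ω, X ω ^ k * u ω ∂μ = 0) :
    ∫ ω, Complex.exp (X ω * Complex.I) * u ω ∂μ = 0 := by
  have hseries (ω : Ω) :
      HasSum (fun k : ℕ => |X ω| ^ k / k.factorial * |u ω|) (Real.exp |X ω| * |u ω|) := by
    simpa [Real.exp_eq_exp_ℝ] using (NormedSpace.expSeries_div_hasSum_exp |X ω|).mul_right |u ω|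
  have hcseries (ω : Ω) : HasSum (fun k : ℕ => (X ω * Complex.I) ^ k / k.factorial * u ω)
      (Complex.exp (X ω * Complex.I) * u ω) := by
    simpa [Complex.exp_eq_exp_ℂ] using
      (NormedSpace.expSeries_div_hasSum_exp (X ω * Complex.I : ℂ)).mul_right (u ω : ℂ)
  have hsum := hasSum_integral_of_dominated_convergence (μ := μ)
    (fun (k : ℕ) ω => |X ω| ^ k / k.factorial * |u ω|)
    (F := fun (k : ℕ) ω => (X ω * Complex.I) ^ k / k.factorial * (u ω : ℂ))
    (fun k => ((((Complex.continuous_ofReal.comp_aestronglyMeasurable hX).mul_const _).pow k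
      ).mul_const (k.factorial : ℂ)⁻¹).mul (Complex.continuous_ofReal.comp_aestronglyMeasurable hu))
    (fun k => .of_forall fun ω => by simp)
    (.of_forall fun ω => (hseries ω).summable)
    (by simpa [(hseries _).tsum_eq, abs_mul] using hexp.abs)
    (.of_forall hcseries)
  have hzero (k : ℕ) : ∫ ω, (X ω * Complex.I) ^ k / k.factorial * (u ω : ℂ) ∂μ = 0 := by
    have (ω : Ω) : (X ω * Complex.I) ^ k / k.factorial * (u ω : ℂ) =
        (Complex.I ^ k / k.factorial) * ((X ω ^ k * u ω : ℝ) : ℂ) := by push_cast; ring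
    simp only [this, integral_const_mul, integral_complex_ofReal, hmom k, Complex.ofReal_zero,
      mul_zero]
  simp only [hzero] at hsum
  exact hsum.unique hasSum_zero

section Fourier

open scoped FourierTransform

variable {V : Type*} [NormedAddCommGroup V] [InnerProductSpace ℝ V] [FiniteDimensional ℝ V]
  [MeasurableSpace V] [BorelSpace V]

lemma ae_eq_zero_of_fourier_eq_zero {u : V → ℂ} (hu : Integrable u)
    (hfourier : ∀ w, 𝓕 u w = 0) : ∀ᵐ x, u x = 0 := by
  refine ae_eq_zero_of_integral_contDiff_smul_eq_zero hu.locallyIntegrable fun g hg hg' => ?_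
  let G : 𝓢(V, ℂ) := (hg'.comp_left Complex.ofReal_zero).toSchwartzMap
    (Complex.ofRealCLM.contDiff.comp hg)
  have hflip : ∫ x, 𝓕 u x • 𝓕⁻ G x = ∫ x, u x • 𝓕 (𝓕⁻ G) x := by
    have h := VectorFourier.integral_fourierIntegral_smul_eq_flip (L := innerₗ V) (μ := volume)
      (ν := volume) Real.continuous_fourierChar continuous_inner hu (𝓕⁻ G).integrable
    rwa [flip_innerₗ] at h
  rw [FourierTransform.fourier_fourierInv_eq] at hflip
  have hG (x : V) : G x = g x := rfl
  simpa [hfourier, hG, mul_comm] using hflip.symm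

end Fourier

end MomentProblem

section GaussianMoments

open scoped FourierTransform InnerProductSpace

variable {V : Type*} [NormedAddCommGroup V] [InnerProductSpace ℝ V] {b : ℝ}

lemma exp_inner_mul_gaussianSchwartz (hb : 0 < b) (ξ y : V) :
    Real.exp ⟪ξ, y⟫_ℝ * gaussianSchwartz V hb y =
      Real.exp (‖ξ‖ ^ 2 / (4 * b)) * gaussianSchwartz V hb (y - (1 / (2 * b)) • ξ) := by
  rw [gaussianSchwartz_apply, gaussianSchwartz_apply, ← Real.exp_add, ← Real.exp_add,
    norm_sub_sq_real, inner_smul_right, norm_smul, real_inner_comm, mul_pow, Real.norm_eq_abs,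
    sq_abs]
  congr 1
  field_simp
  ring

variable [MeasurableSpace V] [BorelSpace V] [FiniteDimensional ℝ V]

lemma memLp_exp_inner_mul_gaussianSchwartz (hb : 0 < b) (ξ : V) (p : ℝ≥0∞) :
    MemLp (fun y => Real.exp ⟪ξ, y⟫_ℝ * gaussianSchwartz V hb y) p := by
  simp only [exp_inner_mul_gaussianSchwartz]
  exact (((gaussianSchwartz V hb).compSubConstCLM ℝ ((1 / (2 * b)) • ξ)).memLp p).const_mul _

lemma memLp_exp_abs_inner_mul_gaussianSchwartz (hb : 0 < b) (ξ : V) (p : ℝ≥0∞) :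
    MemLp (fun y => Real.exp |⟪ξ, y⟫_ℝ| * gaussianSchwartz V hb y) p := by
  refine ((memLp_exp_inner_mul_gaussianSchwartz hb ξ p).add
    (memLp_exp_inner_mul_gaussianSchwartz hb (-ξ) p)).mono (by fun_prop) (.of_forall fun y => ?_)
  have hpos : 0 ≤ gaussianSchwartz V hb y := (Real.exp_pos _).le
  simp only [Pi.add_apply, inner_neg_left, ← add_mul, norm_mul, Real.norm_eq_abs, Real.abs_exp,
    abs_of_nonneg hpos]
  gcongr
  exact (Real.exp_abs_le _).trans (le_abs_self _)

lemma ae_eq_zero_of_forall_integral_inner_pow_mul_gaussian_eq_zero (hb : 0 < b)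
    (f : V → ℝ) (hf : MemLp f 2)
    (hmom : ∀ (ξ : V) (k : ℕ), ∫ y, ⟪ξ, y⟫_ℝ ^ k * (f y * gaussianSchwartz V hb y) = 0) :
    f =ᵐ[volume] 0 := by
  have hint : Integrable fun y => f y * gaussianSchwartz V hb y :=
    hf.integrable_mul ((gaussianSchwartz V hb).memLp 2)
  have hfourier (w : V) : 𝓕 (fun y => ((f y * gaussianSchwartz V hb y : ℝ) : ℂ)) w = 0 := by
    have hexp : Integrable fun y =>
        Real.exp |⟪(-2 * Real.pi) • w, y⟫_ℝ| * (f y * gaussianSchwartz V hb y) :=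
      (hf.integrable_mul (memLp_exp_abs_inner_mul_gaussianSchwartz hb _ 2)).congr
        (.of_forall fun y => by simp only [Pi.mul_apply]; ring)
    rw [Real.fourier_eq', ← integral_cexp_mul_I_mul_eq_zero (by fun_prop)
      hint.aestronglyMeasurable hexp (hmom _)]
    refine integral_congr_ae (.of_forall fun y => ?_)
    simp [inner_smul_left, real_inner_comm]
  filter_upwards [ae_eq_zero_of_fourier_eq_zero hint.ofReal hfourier] with y hy
  have hpos : 0 < gaussianSchwartz V hb y := Real.exp_pos _
  simpa [hpos.ne'] using hy

end GaussianMoments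

section OrthonormalBasis

open scoped InnerProductSpace

variable {d : ℕ}

lemma hermiteSchwartz_zero : hermiteSchwartz (0 : Fin d → ℕ) =
    hermiteNorming 0 ^ d • gaussianSchwartz _ (by norm_num : (0 : ℝ) < 1 / 4) := by
  ext y
  rw [hermiteSchwartz_apply, hermiteFunMulti_eq_mul_exp]
  simp [hermitePolyMulti, hermitePoly, gaussianSchwartz_apply, ← Real.exp_add]

lemma hermCoeff_hermiteSchwartz_zero :
    hermCoeff d (hermiteSchwartz (0 : Fin d → ℕ)) 0 = 1 := by
  have hsq (y : EuclideanSpace ℝ (Fin d)) : hermiteSchwartz (0 : Fin d → ℕ) y *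
      hermiteSchwartz 0 y = (√(2 * Real.pi))⁻¹ ^ d * Real.exp (-(1 / 2) * ‖y‖ ^ 2) := by
    have hnorming : hermiteNorming 0 * hermiteNorming 0 = (√(2 * Real.pi))⁻¹ := by
      rw [hermiteNorming, ← mul_inv, Real.mul_self_sqrt (by positivity)]
      simp
    rw [hermiteSchwartz_zero, ← hnorming, smul_apply, smul_eq_mul, mul_mul_mul_comm, ← mul_pow,
      gaussianSchwartz_apply, ← Real.exp_add]
    ring_nf
  rw [hermCoeff_eq_integral_hermiteSchwartz]
  simp only [hsq]
  rw [integral_const_mul, GaussianFourier.integral_rexp_neg_mul_sq_norm (by norm_num),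
    finrank_euclideanSpace_fin, Real.sqrt_eq_rpow, ← Real.rpow_neg_one,
    ← Real.rpow_mul (by positivity), ← Real.rpow_mul_natCast (by positivity),
    div_div_eq_mul_div, div_one, mul_comm Real.pi, ← Real.rpow_add (by positivity)]
  ring_nf
  exact Real.rpow_zero _

lemma hermCoeff_hermiteSchwartz_of_ne {α β : Fin d → ℕ} (h : α ≠ β) :
    hermCoeff d (hermiteSchwartz α) β = 0 := by
  obtain ⟨i, hi⟩ := Function.ne_iff.1 h
  have hsymm : hermCoeff d (hermiteSchwartz β) α = hermCoeff d (hermiteSchwartz α) β := by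
    rw [hermCoeff_eq_inner, hermCoeff_eq_inner, real_inner_comm]
  have heigen : (α i : ℝ) * hermCoeff d (hermiteSchwartz α) β =
      β i * hermCoeff d (hermiteSchwartz α) β := by
    calc (α i : ℝ) * hermCoeff d (hermiteSchwartz α) β
        = hermCoeff d (creation i (annihilation i (hermiteSchwartz β))) α := by
          rw [hermCoeff_creation_annihilation, hsymm]
      _ = ∫ y, hermiteSchwartz β y * creation i (annihilation i (hermiteSchwartz α)) y := by
          rw [hermCoeff_eq_integral_hermiteSchwartz, integral_creation_mul,
            integral_annihilation_mul]
      _ = hermCoeff d (creation i (annihilation i (hermiteSchwartz α))) β := by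
          simp only [hermCoeff_eq_integral_hermiteSchwartz, mul_comm]
      _ = β i * hermCoeff d (hermiteSchwartz α) β := hermCoeff_creation_annihilation _ _ _
  exact (mul_eq_mul_right_iff.1 heigen).resolve_left (by exact_mod_cast hi)

lemma hermCoeff_hermiteSchwartz_add_single (i : Fin d) (β : Fin d → ℕ) :
    hermCoeff d (hermiteSchwartz (β + Pi.single i 1)) (β + Pi.single i 1) =
      hermCoeff d (hermiteSchwartz β) β := by
  have h := hermCoeff_annihilation i (hermiteSchwartz (β + Pi.single i 1)) β
  rw [annihilation_hermiteSchwartz, add_tsub_cancel_right, hermCoeff_eq_inner, map_smul,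
    real_inner_smul_left, ← hermCoeff_eq_inner, Pi.add_apply, Pi.single_eq_same,
    Nat.cast_succ] at h
  exact (mul_left_cancel₀ (by positivity) h).symm

lemma hermCoeff_hermiteSchwartz_self (β : Fin d → ℕ) :
    hermCoeff d (hermiteSchwartz β) β = 1 := by
  suffices hshift : ∀ γ, hermCoeff d (hermiteSchwartz (γ + β)) (γ + β) =
      hermCoeff d (hermiteSchwartz γ) γ by
    simpa [hermCoeff_hermiteSchwartz_zero] using hshift 0
  induction β using Pi.single_induction with
  | zero => simp
  | add α β hα hβ => exact fun γ => by rw [← add_assoc, hβ, hα]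
  | single i m =>
    induction m with
    | zero => simp
    | succ m ih =>
      intro γ
      rw [Pi.single_add, ← add_assoc, hermCoeff_hermiteSchwartz_add_single, ih]

lemma orthonormal_hermiteSchwartz :
    Orthonormal ℝ fun β : Fin d → ℕ => schwartzToL2 (hermiteSchwartz β) := by
  rw [orthonormal_iff_ite]
  intro α β
  rw [← hermCoeff_eq_inner]
  split_ifs with h
  · rw [h, hermCoeff_hermiteSchwartz_self]
  · exact hermCoeff_hermiteSchwartz_of_ne h

lemma coordMul_mem_span_hermiteSchwartz (i : Fin d) {φ : 𝓢(EuclideanSpace ℝ (Fin d), ℝ)}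
    (hφ : φ ∈ Submodule.span ℝ (Set.range hermiteSchwartz)) :
    coordMul i φ ∈ Submodule.span ℝ (Set.range (hermiteSchwartz (d := d))) := by
  induction hφ using Submodule.span_induction with
  | mem φ hφ =>
    obtain ⟨β, rfl⟩ := hφ
    rw [← annihilation_add_creation, annihilation_hermiteSchwartz, creation_hermiteSchwartz]
    exact add_mem (Submodule.smul_mem _ _ (Submodule.subset_span ⟨_, rfl⟩))
      (Submodule.smul_mem _ _ (Submodule.subset_span ⟨_, rfl⟩))
  | zero => simp
  | add φ ψ _ _ hφ hψ => rw [map_add]; exact add_mem hφ hψ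
  | smul c φ _ hφ => rw [map_smul]; exact Submodule.smul_mem _ c hφ

lemma exists_mem_span_hermiteSchwartz_eq_inner_pow_mul (ξ : EuclideanSpace ℝ (Fin d)) (k : ℕ)
    {φ : 𝓢(EuclideanSpace ℝ (Fin d), ℝ)}
    (hφ : φ ∈ Submodule.span ℝ (Set.range hermiteSchwartz)) :
    ∃ ψ ∈ Submodule.span ℝ (Set.range (hermiteSchwartz (d := d))),
      ∀ y, ψ y = ⟪ξ, y⟫_ℝ ^ k * φ y := by
  induction k with
  | zero => exact ⟨φ, hφ, by simp⟩
  | succ k ih =>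
    obtain ⟨ψ, hψ, hψ'⟩ := ih
    refine ⟨∑ i, ξ i • coordMul i ψ, sum_mem fun i _ =>
      Submodule.smul_mem _ _ (coordMul_mem_span_hermiteSchwartz i hψ), fun y => ?_⟩
    have hinner : ⟪ξ, y⟫_ℝ = ∑ i, ξ i * y i := by
      simp [PiLp.inner_apply, mul_comm]
    simp only [sum_apply, smul_apply, smul_eq_mul, coordMul_apply, pow_succ, hψ', hinner,
      Finset.mul_sum, Finset.sum_mul]
    exact Finset.sum_congr rfl fun i _ => by ring

lemma orthogonal_span_hermiteSchwartz_eq_bot :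
    (Submodule.span ℝ (Set.range fun β : Fin d → ℕ => schwartzToL2 (hermiteSchwartz β)))ᗮ = ⊥ := by
  refine (Submodule.eq_bot_iff _).2 fun f hf => ?_
  have horth (φ : 𝓢(EuclideanSpace ℝ (Fin d), ℝ))
      (hφ : φ ∈ Submodule.span ℝ (Set.range hermiteSchwartz)) : ∫ y, f y * φ y = 0 := by
    rw [← inner_schwartzToL2_right]
    refine (Submodule.mem_orthogonal' _ f).1 hf _ ?_
    simpa only [Submodule.map_span, ← Set.range_comp, Function.comp_def] using!
      Submodule.mem_map_of_mem (f := (schwartzToL2 (d := d)).toLinearMap) hφ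
  have hb : (0 : ℝ) < 1 / 4 := by norm_num
  have hgauss : gaussianSchwartz _ hb ∈
      Submodule.span ℝ (Set.range (hermiteSchwartz (d := d))) := by
    have hne : hermiteNorming 0 ^ d ≠ 0 := by unfold hermiteNorming; positivity
    rw [← Submodule.smul_mem_iff _ hne, ← hermiteSchwartz_zero]
    exact Submodule.subset_span ⟨0, rfl⟩
  refine (Lp.eq_zero_iff_ae_eq_zero).2
    (ae_eq_zero_of_forall_integral_inner_pow_mul_gaussian_eq_zero hb f (Lp.memLp f) fun ξ k => ?_)
  obtain ⟨ψ, hψ, hψ'⟩ := exists_mem_span_hermiteSchwartz_eq_inner_pow_mul ξ k hgauss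
  simpa only [hψ', mul_left_comm] using horth ψ hψ

/-- The Hermite functions as a Hilbert basis of `L²(ℝ^d)`. -/
noncomputable def hermiteBasis :
    HilbertBasis (Fin d → ℕ) ℝ (Lp ℝ 2 (volume : Measure (EuclideanSpace ℝ (Fin d)))) :=
  HilbertBasis.mkOfOrthogonalEqBot orthonormal_hermiteSchwartz
    orthogonal_span_hermiteSchwartz_eq_bot

lemma hasSum_hermCoeff_sq (φ : 𝓢(EuclideanSpace ℝ (Fin d), ℝ)) :
    HasSum (fun β => hermCoeff d φ β ^ 2) (‖schwartzToL2 φ‖ ^ 2) := by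
  have hbasis (β : Fin d → ℕ) : hermiteBasis β = schwartzToL2 (hermiteSchwartz β) := by
    rw [hermiteBasis, HilbertBasis.coe_mkOfOrthogonalEqBot]
  simpa [hbasis, real_inner_comm (schwartzToL2 φ), ← hermCoeff_eq_inner, ← pow_two] using
    hermiteBasis.hasSum_inner_mul_inner (schwartzToL2 φ) (schwartzToL2 φ)

end OrthonormalBasis

section HermiteNorms

variable {d : ℕ}

section Pow

variable (n : ℕ) (φ : 𝓢(EuclideanSpace ℝ (Fin d), ℝ))

lemma hermCoeff_harmonicOscillator_pow (β : Fin d → ℕ) :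
    hermCoeff d ((harmonicOscillator ^ n) φ) β = oscillatorEigenvalue β ^ n * hermCoeff d φ β := by
  induction n with
  | zero => simp
  | succ n ih =>
    rw [pow_succ', mul_apply_eq_comp, hermCoeff_harmonicOscillator, ih, pow_succ',
      mul_assoc]

lemma inner_harmonicOscillator_pow (ψ : 𝓢(EuclideanSpace ℝ (Fin d), ℝ)) :
    inner ℝ (schwartzToL2 ((harmonicOscillator ^ n) φ)) (schwartzToL2 ψ) =
      inner ℝ (schwartzToL2 φ) (schwartzToL2 ((harmonicOscillator ^ n) ψ)) := by
  induction n generalizing φ with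
  | zero => simp
  | succ n ih =>
    rw [pow_succ, mul_apply_eq_comp, ih, inner_harmonicOscillator, ← mul_apply_eq_comp,
      ← pow_succ', pow_succ]

lemma hasSum_oscillatorEigenvalue_pow_mul_hermCoeff_sq :
    HasSum (fun β => oscillatorEigenvalue β ^ (2 * n) * hermCoeff d φ β ^ 2)
      (‖schwartzToL2 ((harmonicOscillator ^ n) φ)‖ ^ 2) := by
  simpa only [hermCoeff_harmonicOscillator_pow, mul_pow, ← pow_mul'] using
    hasSum_hermCoeff_sq ((harmonicOscillator ^ n) φ)

lemma hermNorm_eq_norm : hermNorm d n φ = ‖schwartzToL2 ((harmonicOscillator ^ n) φ)‖ := by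
  rw [← Real.sqrt_sq (norm_nonneg (schwartzToL2 _)),
    ← (hasSum_oscillatorEigenvalue_pow_mul_hermCoeff_sq n φ).tsum_eq]
  rfl

lemma hasSum_hermNorm_sq :
    HasSum (fun β => oscillatorEigenvalue β ^ (2 * n) * hermCoeff d φ β ^ 2)
      (hermNorm d n φ ^ 2) := by
  rw [hermNorm_eq_norm]
  exact hasSum_oscillatorEigenvalue_pow_mul_hermCoeff_sq n φ

lemma hermNorm_succ : hermNorm d (n + 1) φ = hermNorm d n (harmonicOscillator φ) := by
  rw [hermNorm_eq_norm, hermNorm_eq_norm, pow_succ, mul_apply_eq_comp]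

lemma hermNorm_add_le (ψ : 𝓢(EuclideanSpace ℝ (Fin d), ℝ)) :
    hermNorm d n (φ + ψ : 𝓢(_, ℝ)) ≤ hermNorm d n φ + hermNorm d n ψ := by
  simp only [hermNorm_eq_norm, map_add]
  exact norm_add_le _ _

lemma hermNorm_sum_le {ι : Type*} (s : Finset ι) (f : ι → 𝓢(EuclideanSpace ℝ (Fin d), ℝ)) :
    hermNorm d n (∑ i ∈ s, f i : 𝓢(_, ℝ)) ≤ ∑ i ∈ s, hermNorm d n (f i) := by
  simp only [hermNorm_eq_norm, map_sum]
  exact norm_sum_le _ _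

lemma hermNorm_smul (c : ℝ) : hermNorm d n (c • φ : 𝓢(_, ℝ)) = |c| * hermNorm d n φ := by
  simp only [hermNorm_eq_norm, map_smul, norm_smul, Real.norm_eq_abs]

end Pow

lemma hermNorm_nonneg (n : ℕ) (f : EuclideanSpace ℝ (Fin d) → ℝ) : 0 ≤ hermNorm d n f :=
  Real.sqrt_nonneg _

section Eigenvalue

variable (i : Fin d) (β : Fin d → ℕ)

lemma oscillatorEigenvalue_nonneg : 0 ≤ oscillatorEigenvalue β := Nat.cast_nonneg _

lemma oscillatorEigenvalue_add_single :
    oscillatorEigenvalue (β + Pi.single i 1) = oscillatorEigenvalue β + 2 := by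
  simp only [oscillatorEigenvalue, Pi.add_apply, Finset.sum_add_distrib, Finset.sum_pi_single',
    Finset.mem_univ, if_true]
  push_cast
  ring

lemma coord_add_one_le_oscillatorEigenvalue : (β i : ℝ) + 1 ≤ oscillatorEigenvalue β := by
  have hβ : β i ≤ ∑ j, β j := Finset.single_le_sum (fun _ _ => Nat.zero_le _) (Finset.mem_univ i)
  have hd := i.pos
  rw [oscillatorEigenvalue]
  exact_mod_cast (by lia : β i + 1 ≤ 2 * ∑ j, β j + d)

end Eigenvalue

section Estimates

variable (i : Fin d) (n : ℕ) (φ : 𝓢(EuclideanSpace ℝ (Fin d), ℝ))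

lemma hermNorm_le_hermNorm_succ [NeZero d] : hermNorm d n φ ≤ hermNorm d (n + 1) φ := by
  rw [← sq_le_sq₀ (hermNorm_nonneg _ _) (hermNorm_nonneg _ _)]
  refine hasSum_le (fun β => ?_) (hasSum_hermNorm_sq n φ) (hasSum_hermNorm_sq (n + 1) φ)
  have hone : 1 ≤ oscillatorEigenvalue β :=
    (le_add_of_nonneg_left (Nat.cast_nonneg _)).trans (coord_add_one_le_oscillatorEigenvalue 0 β)
  gcongr
  exact n.le_succ

lemma hermNorm_annihilation_le : hermNorm d n (annihilation i φ) ≤ hermNorm d (n + 1) φ := by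
  rw [← sq_le_sq₀ (hermNorm_nonneg _ _) (hermNorm_nonneg _ _)]
  refine hasSum_le_inj (fun β => β + Pi.single i 1) (add_left_injective _) (fun _ _ => ?_)
    (fun β => ?_) (hasSum_hermNorm_sq n _) (hasSum_hermNorm_sq (n + 1) φ)
  · exact mul_nonneg (pow_nonneg (oscillatorEigenvalue_nonneg _) _) (sq_nonneg _)
  · have hβ := coord_add_one_le_oscillatorEigenvalue i β
    have hnonneg := oscillatorEigenvalue_nonneg β
    rw [hermCoeff_annihilation, mul_pow, Real.sq_sqrt (by positivity), ← mul_assoc,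
      oscillatorEigenvalue_add_single, mul_add_one 2 n, pow_add]
    gcongr
    · linarith
    · nlinarith

lemma hermNorm_creation_le :
    hermNorm d n (creation i φ) ≤ 3 ^ n * hermNorm d (n + 1) φ := by
  rw [← sq_le_sq₀ (hermNorm_nonneg _ _) (mul_nonneg (by positivity) (hermNorm_nonneg _ _)),
    mul_pow]
  have hinj : Function.Injective fun β : Fin d → ℕ => β + Pi.single i 1 := add_left_injective _
  have hsum := hasSum_hermNorm_sq n (creation i φ)
  have hzero (β : Fin d → ℕ) (hβ : β ∉ Set.range fun β : Fin d → ℕ => β + Pi.single i 1) :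
      oscillatorEigenvalue β ^ (2 * n) * hermCoeff d (creation i φ) β ^ 2 = 0 := by
    have hβi : β i = 0 := by
      by_contra h
      exact hβ ⟨_, sub_single_add_single h⟩
    simp [hermCoeff_creation, hβi]
  rw [← hinj.hasSum_iff hzero] at hsum
  refine hasSum_le (fun β => ?_) hsum ((hasSum_hermNorm_sq (n + 1) φ).mul_left ((3 ^ n) ^ 2))
  have hnonneg := oscillatorEigenvalue_nonneg β
  have hβ := coord_add_one_le_oscillatorEigenvalue i β
  calc oscillatorEigenvalue (β + Pi.single i 1) ^ (2 * n) *
        hermCoeff d (creation i φ) (β + Pi.single i 1) ^ 2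
      = (oscillatorEigenvalue β + 2) ^ (2 * n) * (β i + 1) * hermCoeff d φ β ^ 2 := by
        rw [hermCoeff_creation, add_tsub_cancel_right, mul_pow, Real.sq_sqrt (by positivity),
          oscillatorEigenvalue_add_single, Pi.add_apply, Pi.single_eq_same, Nat.cast_succ,
          mul_assoc]
    _ ≤ (3 * oscillatorEigenvalue β) ^ (2 * n) * oscillatorEigenvalue β ^ 2 *
          hermCoeff d φ β ^ 2 := by
        gcongr <;> nlinarith
    _ = (3 ^ n) ^ 2 * (oscillatorEigenvalue β ^ (2 * (n + 1)) * hermCoeff d φ β ^ 2) := by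
        rw [mul_pow, ← pow_mul']; ring

end Estimates

end HermiteNorms

section Translation

open scoped Polynomial

variable {d : ℕ}

section Commutation

variable (i : Fin d) (x : EuclideanSpace ℝ (Fin d)) (φ : 𝓢(EuclideanSpace ℝ (Fin d), ℝ))

lemma lineDerivOp_compSubConstCLM (v y : EuclideanSpace ℝ (Fin d)) :
    ∂_{v} (φ.compSubConstCLM ℝ x) y = ∂_{v} φ (y - x) := by
  simp only [SchwartzMap.lineDerivOp_apply_eq_fderiv]
  exact congrArg (fun L : EuclideanSpace ℝ (Fin d) →L[ℝ] ℝ => L v) (fderiv_comp_sub x)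

lemma annihilation_compSubConstCLM : annihilation i (φ.compSubConstCLM ℝ x) =
    (annihilation i φ + (x i / 2) • φ).compSubConstCLM ℝ x := by
  ext y
  simp only [annihilation_apply, SchwartzMap.compSubConstCLM_apply, add_apply, smul_apply,
    smul_eq_mul, lineDerivOp_compSubConstCLM, PiLp.sub_apply]
  ring

lemma creation_compSubConstCLM : creation i (φ.compSubConstCLM ℝ x) =
    (creation i φ + (x i / 2) • φ).compSubConstCLM ℝ x := by
  ext y
  simp only [creation_apply, SchwartzMap.compSubConstCLM_apply, add_apply, smul_apply,
    smul_eq_mul, lineDerivOp_compSubConstCLM, PiLp.sub_apply]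
  ring

lemma harmonicOscillator_compSubConstCLM : harmonicOscillator (φ.compSubConstCLM ℝ x) =
    (harmonicOscillator φ +
      ∑ i, (x i • (annihilation i φ + creation i φ) + (x i ^ 2 / 2) • φ)).compSubConstCLM ℝ x := by
  have hterm (i : Fin d) : creation i (annihilation i (φ.compSubConstCLM ℝ x)) +
      annihilation i (creation i (φ.compSubConstCLM ℝ x)) =
        (creation i (annihilation i φ) + annihilation i (creation i φ) +
          (x i • (annihilation i φ + creation i φ) + (x i ^ 2 / 2) • φ)).compSubConstCLM ℝ x := by
    rw [annihilation_compSubConstCLM, creation_compSubConstCLM, creation_compSubConstCLM,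
      annihilation_compSubConstCLM, ← map_add]
    congr 1
    simp only [map_add, map_smul]
    module
  simp only [harmonicOscillator_apply, hterm, ← map_sum, ← Finset.sum_add_distrib]

end Commutation

lemma hermNorm_zero_compSubConstCLM (x : EuclideanSpace ℝ (Fin d))
    (φ : 𝓢(EuclideanSpace ℝ (Fin d), ℝ)) :
    hermNorm d 0 (φ.compSubConstCLM ℝ x) = hermNorm d 0 φ := by
  rw [← sq_eq_sq₀ (hermNorm_nonneg _ _) (hermNorm_nonneg _ _), hermNorm_eq_norm, hermNorm_eq_norm,
    pow_zero, one_apply_eq_self, one_apply_eq_self, ← real_inner_self_eq_norm_sq,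
    ← real_inner_self_eq_norm_sq, inner_schwartzToL2, inner_schwartzToL2]
  exact integral_sub_right_eq_self (fun y => φ y * φ y) x

lemma hermNorm_coord_smul_add_le (i : Fin d) (n : ℕ) (x : EuclideanSpace ℝ (Fin d))
    (φ : 𝓢(EuclideanSpace ℝ (Fin d), ℝ)) :
    hermNorm d n (x i • (annihilation i φ + creation i φ) + (x i ^ 2 / 2) • φ : 𝓢(_, ℝ)) ≤
      ((1 + 3 ^ n) * ‖x‖ + ‖x‖ ^ 2 / 2) * hermNorm d (n + 1) φ := by
  have : NeZero d := ⟨i.pos.ne'⟩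
  have hxi : |x i| ≤ ‖x‖ := PiLp.norm_apply_le x i
  calc hermNorm d n (x i • (annihilation i φ + creation i φ) + (x i ^ 2 / 2) • φ : 𝓢(_, ℝ))
      ≤ |x i| * (hermNorm d n (annihilation i φ) + hermNorm d n (creation i φ)) +
          |x i| ^ 2 / 2 * hermNorm d n φ := by
        refine (hermNorm_add_le _ _ _).trans ?_
        rw [hermNorm_smul, hermNorm_smul, abs_div, abs_pow, abs_two]
        gcongr
        exact hermNorm_add_le _ _ _
    _ ≤ ‖x‖ * (hermNorm d (n + 1) φ + 3 ^ n * hermNorm d (n + 1) φ) +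
          ‖x‖ ^ 2 / 2 * hermNorm d (n + 1) φ := by
        gcongr
        exacts [add_nonneg (hermNorm_nonneg _ _) (hermNorm_nonneg _ _),
          hermNorm_annihilation_le i n φ, hermNorm_creation_le i n φ, hermNorm_nonneg _ _,
          hermNorm_le_hermNorm_succ n φ]
    _ = ((1 + 3 ^ n) * ‖x‖ + ‖x‖ ^ 2 / 2) * hermNorm d (n + 1) φ := by ring

lemma hermNorm_harmonicOscillator_add_sum_le (n : ℕ) (x : EuclideanSpace ℝ (Fin d))
    (φ : 𝓢(EuclideanSpace ℝ (Fin d), ℝ)) :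
    hermNorm d n (harmonicOscillator φ + ∑ i, (x i • (annihilation i φ + creation i φ) +
        (x i ^ 2 / 2) • φ) : 𝓢(_, ℝ)) ≤
      (1 + d * ((1 + 3 ^ n) * ‖x‖ + ‖x‖ ^ 2 / 2)) * hermNorm d (n + 1) φ := by
  calc _ ≤ hermNorm d (n + 1) φ +
          ∑ _i : Fin d, ((1 + 3 ^ n) * ‖x‖ + ‖x‖ ^ 2 / 2) * hermNorm d (n + 1) φ := by
        refine (hermNorm_add_le _ _ _).trans ?_
        rw [hermNorm_succ]
        gcongr
        exact (hermNorm_sum_le _ _ _).trans (Finset.sum_le_sum fun i _ =>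
          by simpa only [hermNorm_succ] using hermNorm_coord_smul_add_le i n x φ)
    _ = (1 + d * ((1 + 3 ^ n) * ‖x‖ + ‖x‖ ^ 2 / 2)) * hermNorm d (n + 1) φ := by
        rw [Finset.sum_const, Finset.card_univ, Fintype.card_fin, nsmul_eq_mul]; ring

lemma exists_polynomial_hermNorm_compSubConstCLM_le (d n : ℕ) :
    ∃ P : ℝ≥0[X], ∀ (x : EuclideanSpace ℝ (Fin d)) (φ : 𝓢(EuclideanSpace ℝ (Fin d), ℝ)),
      hermNorm d n (φ.compSubConstCLM ℝ x) ≤ (P.eval ‖x‖₊ : ℝ≥0) * hermNorm d n φ := by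
  induction n with
  | zero => exact ⟨1, fun x φ => by simp [hermNorm_zero_compSubConstCLM]⟩
  | succ n ih =>
    obtain ⟨P, hP⟩ := ih
    refine ⟨P * (1 + d * ((1 + 3 ^ n) * .X + .C (1 / 2) * .X ^ 2)), fun x φ => ?_⟩
    rw [hermNorm_succ, harmonicOscillator_compSubConstCLM]
    refine (hP x _).trans ?_
    calc _ ≤ (P.eval ‖x‖₊ : ℝ≥0) *
            ((1 + d * ((1 + 3 ^ n) * ‖x‖ + ‖x‖ ^ 2 / 2)) * hermNorm d (n + 1) φ) := by
          exact mul_le_mul_of_nonneg_left (hermNorm_harmonicOscillator_add_sum_le n x φ)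
            (NNReal.coe_nonneg _)
      _ = _ := by
          simp only [one_div, Polynomial.eval_mul, Polynomial.eval_add, Polynomial.eval_one,
            Polynomial.eval_natCast, Polynomial.eval_pow, Polynomial.eval_ofNat, Polynomial.eval_X,
            Polynomial.eval_C, NNReal.coe_mul, NNReal.coe_add, NNReal.coe_one, NNReal.coe_natCast,
            NNReal.coe_pow, NNReal.coe_ofNat, coe_nnnorm, NNReal.coe_inv]
          ring

end Translation

section Averaging

lemma integrable_polynomial_eval_nnnorm {Ω V : Type*} [MeasurableSpace Ω] {μ : Measure Ω}
    [NormedAddCommGroup V] {X : Ω → V} (P : Polynomial ℝ≥0)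
    (hmom : ∀ k : ℕ, Integrable (fun ω => ‖X ω‖ ^ k) μ) :
    Integrable (fun ω => ((P.eval ‖X ω‖₊ : ℝ≥0) : ℝ)) μ := by
  simp only [Polynomial.eval_eq_sum_range, NNReal.coe_sum, NNReal.coe_mul, NNReal.coe_pow,
    coe_nnnorm]
  exact integrable_finsetSum _ fun k _ => (hmom k).const_mul _

variable {d : ℕ} {Ω : Type v} [MeasurableSpace Ω] {μ : Measure Ω} [IsFiniteMeasure μ]
  {X : Ω → EuclideanSpace ℝ (Fin d)} (hX : AEStronglyMeasurable X μ)
  (hmom : ∀ k : ℕ, Integrable (fun ω => ‖X ω‖ ^ k) μ) (φ : 𝓢(EuclideanSpace ℝ (Fin d), ℝ))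

lemma integral_averageTranslate_mul (η : 𝓢(EuclideanSpace ℝ (Fin d), ℝ)) :
    ∫ y, averageTranslate hX hmom φ y * η y =
      ∫ ω, (∫ y, φ.compSubConstCLM ℝ (X ω) y * η y) ∂μ := by
  obtain ⟨C, hC⟩ := φ.decay 0 0
  have hint : Integrable (fun p : EuclideanSpace ℝ (Fin d) × Ω => φ (p.1 - X p.2) * η p.1)
      (volume.prod μ) := by
    refine (η.integrable.comp_fst μ).bdd_mul (c := C) ?_ (.of_forall fun p => by
      simpa using hC.2 (p.1 - X p.2))
    exact φ.continuous.comp_aestronglyMeasurable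
      (measurable_fst.aestronglyMeasurable.sub hX.comp_snd)
  calc ∫ y, averageTranslate hX hmom φ y * η y
      = ∫ y, ∫ ω, φ (y - X ω) * η y ∂μ := by simp only [integral_mul_const]; rfl
    _ = ∫ ω, (∫ y, φ.compSubConstCLM ℝ (X ω) y * η y) ∂μ := integral_integral_swap hint

lemma hermNorm_averageTranslate_le {n : ℕ} {P : Ω → ℝ} (hP : Integrable P μ)
    (hbound : ∀ ω, hermNorm d n (φ.compSubConstCLM ℝ (X ω)) ≤ P ω * hermNorm d n φ) :
    hermNorm d n (averageTranslate hX hmom φ) ≤ (∫ ω, P ω ∂μ) * hermNorm d n φ := by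
  set ψ := averageTranslate hX hmom φ
  have hsq : hermNorm d n ψ * hermNorm d n ψ ≤
      (∫ ω, P ω ∂μ) * hermNorm d n φ * hermNorm d n ψ := by
    calc hermNorm d n ψ * hermNorm d n ψ
        = ∫ ω, (∫ y, φ.compSubConstCLM ℝ (X ω) y *
            (harmonicOscillator ^ n) ((harmonicOscillator ^ n) ψ) y) ∂μ := by
          rw [hermNorm_eq_norm, ← real_inner_self_eq_norm_mul_norm,
            inner_harmonicOscillator_pow, inner_schwartzToL2, integral_averageTranslate_mul]
      _ ≤ ∫ ω, P ω * hermNorm d n φ * hermNorm d n ψ ∂μ := by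
          refine (Real.le_norm_self _).trans (norm_integral_le_of_norm_le
            ((hP.mul_const _).mul_const _) (.of_forall fun ω => ?_))
          rw [← inner_schwartzToL2, ← inner_harmonicOscillator_pow]
          refine (norm_inner_le_norm _ _).trans ?_
          rw [← hermNorm_eq_norm, ← hermNorm_eq_norm]
          exact mul_le_mul_of_nonneg_right (hbound ω) (hermNorm_nonneg _ _)
      _ = (∫ ω, P ω ∂μ) * hermNorm d n φ * hermNorm d n ψ := by
          rw [integral_mul_const, integral_mul_const]
  rcases (hermNorm_nonneg n ψ).eq_or_lt with hzero | hpos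
  · have hnonneg (ω : Ω) : 0 ≤ P ω * hermNorm d n φ := (hermNorm_nonneg _ _).trans (hbound ω)
    rw [← hzero, ← integral_mul_const]
    exact integral_nonneg hnonneg
  · exact le_of_mul_le_mul_right hsq hpos

end Averaging

theorem expectation_translate_schwartz_general (d n : ℕ) :
    ∃ P : Polynomial ℝ, (∀ k, 0 ≤ P.coeff k) ∧
      ∀ (Ω : Type v) (_ : MeasurableSpace Ω) (μ : Measure Ω) (X : Ω → EuclideanSpace ℝ (Fin d)),
        AEStronglyMeasurable X μ →
        (∀ k : ℕ, Integrable (fun ω => ‖X ω‖ ^ k) μ) →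
        ∀ φ : SchwartzMap (EuclideanSpace ℝ (Fin d)) ℝ,
          (∃ Ψ : SchwartzMap (EuclideanSpace ℝ (Fin d)) ℝ,
              ∀ y, Ψ y = ∫ ω, φ (y - X ω) ∂μ) ∧
          hermNorm d n (fun y => ∫ ω, φ (y - X ω) ∂μ) ≤
            (∫ ω, P.eval ‖X ω‖ ∂μ) * hermNorm d n (fun z => φ z) := by
  obtain ⟨P, hP⟩ := exists_polynomial_hermNorm_compSubConstCLM_le d n
  refine ⟨P.map NNReal.toRealHom, fun k => ?_, fun Ω _ μ X hX hmom φ => ?_⟩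
  · rw [Polynomial.coeff_map]
    exact (P.coeff k).coe_nonneg
  · have : IsFiniteMeasure μ :=
      (integrable_const_iff_isFiniteMeasure one_ne_zero).1 (by simpa using hmom 0)
    have heval (ω : Ω) : (P.map NNReal.toRealHom).eval ‖X ω‖ = (P.eval ‖X ω‖₊ : ℝ≥0) :=
      Polynomial.eval_map_apply NNReal.toRealHom ‖X ω‖₊
    simp only [heval]
    exact ⟨⟨averageTranslate hX hmom φ, fun y => rfl⟩,
      hermNorm_averageTranslate_le hX hmom φ (integrable_polynomial_eval_nnnorm P hmom)
        fun ω => hP (X ω) φ⟩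

/-- If `X` is a random variable with all moments finite and `φ` is Schwartz,
then `ψ(y) = 𝔼(φ(y - X))` is again Schwartz, and for every `n` there is a
polynomial `P_n` with nonnegative coefficients, independent of `φ` and `X`,
with `|ψ|_n ≤ 𝔼(P_n(|X|)) |φ|_n`. -/
theorem expectation_translate_schwartz (d n : ℕ) :
    ∃ P : Polynomial ℝ, (∀ k, 0 ≤ P.coeff k) ∧
      ∀ (Ω : Type) (_ : MeasurableSpace Ω) (μ : Measure Ω)
        (_ : IsProbabilityMeasure μ) (X : Ω → EuclideanSpace ℝ (Fin d)),
        Measurable X →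
        (∀ k : ℕ, Integrable (fun ω => ‖X ω‖ ^ k) μ) →
        ∀ φ : SchwartzMap (EuclideanSpace ℝ (Fin d)) ℝ,
          (∃ Ψ : SchwartzMap (EuclideanSpace ℝ (Fin d)) ℝ,
              ∀ y, Ψ y = ∫ ω, φ (y - X ω) ∂μ) ∧
          hermNorm d n (fun y => ∫ ω, φ (y - X ω) ∂μ) ≤
            (∫ ω, P.eval ‖X ω‖ ∂μ) * hermNorm d n (fun z => φ z) := by
  obtain ⟨P, hP, hbound⟩ := expectation_translate_schwartz_general d n
  exact ⟨P, hP, fun Ω _ μ _ X hX => hbound Ω _ μ X hX.aestronglyMeasurable⟩
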